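/- Gronwall-type lemma: let g : [0,∞) → ℝ be a differentiable nonnegative function, and suppose there exist positive constants C₁, C₂, C₃ such that g'(t) ≤ −C₁ g(t) + C₂ g(t)^{3/2} + C₃ g(t)³ for all t > 0. Then there exist positive constants C_in and C_out, depending only on C₁, C₂, C₃, such that if g(0) < C_in, then g(t) ≤ C_out e^{−C₁ t} for all t ≥ 0. -/

import Mathlib

open Real

/-!
The function `B t = M e^{-γt} (1 - e^{-(p-1)γt} / 2)` decays like `e^{-γt}`, and satisfies
`B' = -γ B + (p-1) γ / 2 * M e^{-pγt}`. The extra term has the same decay as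
`B ^ p ≤ M ^ p e^{-pγt}` and is linear in `M`, so for small `M` and `p > 1` it dominates any
perturbation of order `B ^ p`. Hence `B` is a strict supersolution, which `g` cannot cross once
`g 0 < B 0 = M / 2`.
-/

section

open Set Filter Asymptotics Topology

theorem image_le_of_lt_of_deriv_right_lt_deriv_boundary {f f' B B' : ℝ → ℝ} {a b : ℝ}
    (hf : ContinuousOn f (Icc a b))
    (hf' : ∀ x ∈ Ioo a b, HasDerivWithinAt f (f' x) (Ici x) x)
    (ha : f a < B a) (hB : ContinuousOn B (Icc a b))
    (hB' : ∀ x ∈ Ioo a b, HasDerivWithinAt B (B' x) (Ici x) x)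
    (bound : ∀ x ∈ Ioo a b, f x = B x → f' x < B' x) {x : ℝ} (hx : x ∈ Icc a b) :
    f x ≤ B x := by
  rcases hx.1.eq_or_lt with rfl | hax
  · exact ha.le
  have hab : a < b := hax.trans_le hx.2
  have lt_near : ∀ᶠ y in 𝓝[>] a, f y < B y := by
    have ha_mem : a ∈ Icc a b := left_mem_Icc.2 hab.le
    have h_le : 𝓝[>] a ≤ 𝓝[Icc a b] a := nhdsWithin_le_of_mem (Icc_mem_nhdsGT hab)
    exact ((hf a ha_mem).mono_left h_le).eventually_lt ((hB a ha_mem).mono_left h_le) ha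
  obtain ⟨y, hfy, hay, hyx⟩ := (lt_near.and (Ioo_mem_nhdsGT hax)).exists
  have h_Icc : Icc y x ⊆ Icc a b := Icc_subset_Icc hay.le hx.2
  have h_Ico : Ico y x ⊆ Ioo a b := fun z hz => ⟨hay.trans_le hz.1, hz.2.trans_le hx.2⟩
  exact image_le_of_deriv_right_lt_deriv_boundary' (hf.mono h_Icc)
    (fun z hz => hf' z (h_Ico hz)) hfy.le (hB.mono h_Icc) (fun z hz => hB' z (h_Ico hz))
    (fun z hz => bound z (h_Ico hz)) (right_mem_Icc.2 hyx.le)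

/-- A strict supersolution of `y' = -γ y + K y ^ p` for small `M`, used as a barrier. The last
factor increases from `1 / 2` to `1`, so that the barrier decays slightly more slowly than
`e^{-γt}`. -/
noncomputable def decayBarrier (M γ p t : ℝ) : ℝ :=
  M * exp (-γ * t) * (1 - exp (-((p - 1) * γ) * t) / 2)

namespace decayBarrier

variable {M γ p t : ℝ}

theorem apply_zero : decayBarrier M γ p 0 = M / 2 := by
  simp only [decayBarrier, mul_zero, exp_zero]
  ring

theorem pos (hM : 0 < M) (hγ : 0 ≤ γ) (hp : 1 ≤ p) (ht : 0 ≤ t) : 0 < decayBarrier M γ p t := by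
  have h_exp : exp (-((p - 1) * γ) * t) ≤ 1 := by
    rw [exp_le_one_iff, neg_mul, neg_nonpos]
    exact mul_nonneg (mul_nonneg (sub_nonneg.2 hp) hγ) ht
  exact mul_pos (by positivity) (by linarith)

theorem le_mul_exp (hM : 0 ≤ M) : decayBarrier M γ p t ≤ M * exp (-γ * t) :=
  mul_le_of_le_one_right (by positivity) (by linarith [exp_pos (-((p - 1) * γ) * t)])

theorem hasDerivAt (M γ p t : ℝ) :
    HasDerivAt (decayBarrier M γ p)
      (-γ * decayBarrier M γ p t + (p - 1) * γ / 2 * M * exp (-(p * γ) * t)) t := by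
  have hasDerivAt_exp (c : ℝ) : HasDerivAt (fun s => exp (c * s)) (exp (c * t) * c) t := by
    simpa only [mul_one] using ((hasDerivAt_id' t).const_mul c).exp
  have exp_split : exp (-(p * γ) * t) = exp (-γ * t) * exp (-((p - 1) * γ) * t) := by
    rw [← exp_add]
    ring_nf
  refine (((hasDerivAt_exp (-γ)).const_mul M).mul
    (((hasDerivAt_exp (-((p - 1) * γ))).div_const 2).const_sub 1)).congr_deriv ?_
  rw [exp_split, decayBarrier]
  ring

theorem rpow_le (hM : 0 < M) (hγ : 0 ≤ γ) (hp : 1 ≤ p) (ht : 0 ≤ t) :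
    decayBarrier M γ p t ^ p ≤ M ^ (p - 1) * M * exp (-(p * γ) * t) := by
  calc decayBarrier M γ p t ^ p ≤ (M * exp (-γ * t)) ^ p :=
        rpow_le_rpow (pos hM hγ hp ht).le (le_mul_exp hM.le) (by linarith)
    _ = M ^ (p - 1) * M * exp (-(p * γ) * t) := by
        rw [mul_rpow hM.le (exp_pos _).le, ← exp_mul, ← rpow_add_one hM.ne', sub_add_cancel]
        ring_nf

theorem mul_rpow_lt {K : ℝ} (hM : 0 < M) (hγ : 0 ≤ γ) (hp : 1 ≤ p) (hK : 0 ≤ K)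
    (hKM : K * M ^ (p - 1) < (p - 1) * γ / 2) (ht : 0 ≤ t) :
    K * decayBarrier M γ p t ^ p < (p - 1) * γ / 2 * M * exp (-(p * γ) * t) := by
  calc K * decayBarrier M γ p t ^ p
      ≤ K * (M ^ (p - 1) * M * exp (-(p * γ) * t)) := by gcongr; exact rpow_le hM hγ hp ht
    _ = K * M ^ (p - 1) * (M * exp (-(p * γ) * t)) := by ring
    _ < (p - 1) * γ / 2 * (M * exp (-(p * γ) * t)) := by gcongr
    _ = (p - 1) * γ / 2 * M * exp (-(p * γ) * t) := by ring

end decayBarrier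

theorem le_mul_exp_of_deriv_right_le_add_mul_rpow {g g' : ℝ → ℝ} {M γ p K T : ℝ}
    (hM : 0 < M) (hγ : 0 ≤ γ) (hp : 1 ≤ p) (hK : 0 ≤ K)
    (hKM : K * M ^ (p - 1) < (p - 1) * γ / 2)
    (hg : ContinuousOn g (Icc 0 T))
    (hg' : ∀ t ∈ Ioo 0 T, HasDerivWithinAt g (g' t) (Ici t) t)
    (bound : ∀ t ∈ Ioo 0 T, g t ∈ Ioc 0 M → g' t ≤ -γ * g t + K * g t ^ p)
    (h0 : g 0 < M / 2) {t : ℝ} (ht : t ∈ Icc 0 T) :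
    g t ≤ M * exp (-γ * t) := by
  have hB := decayBarrier.hasDerivAt M γ p
  refine (image_le_of_lt_of_deriv_right_lt_deriv_boundary hg hg'
    (by rwa [decayBarrier.apply_zero])
    (fun s _ => (hB s).continuousAt.continuousWithinAt)
    (fun s _ => (hB s).hasDerivWithinAt) (fun s hs h_touch => ?_) ht).trans
    (decayBarrier.le_mul_exp hM.le)
  have h_le : decayBarrier M γ p s ≤ M :=
    (decayBarrier.le_mul_exp hM.le).trans <| mul_le_of_le_one_right hM.le <|
      exp_le_one_iff.2 (mul_nonpos_of_nonpos_of_nonneg (neg_nonpos.2 hγ) hs.1.le)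
  have h_bound := bound s hs (h_touch ▸ ⟨decayBarrier.pos hM hγ hp hs.1.le, h_le⟩)
  rw [h_touch] at h_bound
  linarith [decayBarrier.mul_rpow_lt hM hγ hp hK hKM hs.1.le]

theorem eventually_mul_rpow_lt {q ε : ℝ} (K : ℝ) (hq : 0 < q) (hε : 0 < ε) :
    ∀ᶠ x in 𝓝[>] (0 : ℝ), K * x ^ q < ε := by
  have h_lim : Tendsto (fun x : ℝ => K * x ^ q) (𝓝 0) (𝓝 0) := by
    simpa only [zero_rpow hq.ne', mul_zero] using
      (continuousAt_rpow_const 0 q (Or.inr hq.le)).tendsto.const_mul K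
  exact (h_lim.mono_left nhdsWithin_le_nhds).eventually_lt_const hε

theorem stmt_19_general {γ p : ℝ} {F : ℝ → ℝ} (hγ : 0 < γ) (hp : 1 < p)
    (hF : F =O[𝓝[>] 0] fun y => y ^ p) :
    ∃ Cin Cout : ℝ, 0 < Cin ∧ 0 < Cout ∧
      ∀ g g' : ℝ → ℝ,
        ContinuousOn g (Ici 0) →
        (∀ t > 0, HasDerivWithinAt g (g' t) (Ici t) t) →
        (∀ t > 0, 0 < g t → g' t ≤ -γ * g t + F (g t)) →
        g 0 < Cin →
        ∀ t ≥ 0, g t ≤ Cout * exp (-γ * t) := by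
  obtain ⟨K, hK, hFK⟩ := hF.exists_pos
  obtain ⟨r, hr, hFr⟩ := mem_nhdsGT_iff_exists_Ioc_subset.1 hFK.bound
  have hp' : 0 < p - 1 := sub_pos.2 hp
  obtain ⟨M, hKM, hM, hMr⟩ := ((eventually_mul_rpow_lt K hp'
    (by positivity : 0 < (p - 1) * γ / 2)).and (Ioc_mem_nhdsGT hr)).exists
  refine ⟨M / 2, M, half_pos hM, hM, fun g g' hg hg' bound h0 t ht => ?_⟩
  refine le_mul_exp_of_deriv_right_le_add_mul_rpow hM hγ.le hp.le hK.le hKM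
    (hg.mono Icc_subset_Ici_self) (fun s hs => hg' s hs.1) (fun s hs hgs => ?_) h0
    (right_mem_Icc.2 ht)
  have hF_le : F (g s) ≤ K * g s ^ p := by
    have h_norm : ‖F (g s)‖ ≤ K * ‖g s ^ p‖ := hFr ⟨hgs.1, hgs.2.trans hMr⟩
    rw [norm_of_nonneg (rpow_nonneg hgs.1.le p)] at h_norm
    exact (le_norm_self _).trans h_norm
  linarith [bound s hs.1 hgs.1]

theorem isBigO_rpow_rpow_nhdsGT_zero {p q : ℝ} (hpq : p ≤ q) :
    (fun y : ℝ => y ^ q) =O[𝓝[>] 0] fun y => y ^ p := by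
  refine IsBigO.of_bound' ?_
  filter_upwards [Ioc_mem_nhdsGT (zero_lt_one' ℝ)] with y hy
  rw [norm_of_nonneg (rpow_nonneg hy.1.le q), norm_of_nonneg (rpow_nonneg hy.1.le p)]
  exact rpow_le_rpow_of_exponent_ge hy.1 hy.2 hpq

theorem isBigO_rpow_add_pow_three_nhdsGT_zero (C₂ C₃ : ℝ) :
    (fun y : ℝ => C₂ * y ^ ((3 : ℝ) / 2) + C₃ * y ^ 3) =O[𝓝[>] 0] fun y => y ^ ((3 : ℝ) / 2) := by
  have h_cube : (fun y : ℝ => y ^ 3) =O[𝓝[>] 0] fun y => y ^ ((3 : ℝ) / 2) := by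
    simpa only [rpow_ofNat] using
      isBigO_rpow_rpow_nhdsGT_zero (by norm_num : (3 : ℝ) / 2 ≤ 3)
  exact ((isBigO_refl _ _).const_mul_left C₂).add (h_cube.const_mul_left C₃)

end

/-- Gronwall-type lemma.  The constants `Cin, Cout` depend only on
`C₁, C₂, C₃`, hence are quantified before the function `g`. -/
theorem stmt_19 (C₁ C₂ C₃ : ℝ) (hC₁ : 0 < C₁) (hC₂ : 0 < C₂) (hC₃ : 0 < C₃) :
    ∃ Cin Cout : ℝ, 0 < Cin ∧ 0 < Cout ∧
      ∀ g : ℝ → ℝ,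
        (∀ t, 0 ≤ t → 0 ≤ g t) →
        (∀ t, 0 ≤ t → DifferentiableAt ℝ g t) →
        (∀ t > (0:ℝ), deriv g t ≤ -C₁ * g t + C₂ * g t ^ ((3:ℝ) / 2) + C₃ * g t ^ 3) →
        g 0 < Cin →
        ∀ t ≥ (0:ℝ), g t ≤ Cout * Real.exp (-C₁ * t) := by
  obtain ⟨Cin, Cout, hCin, hCout, decay⟩ := stmt_19_general hC₁ (by norm_num : (1 : ℝ) < 3 / 2)
    (isBigO_rpow_add_pow_three_nhdsGT_zero C₂ C₃)
  exact ⟨Cin, Cout, hCin, hCout, fun g _ hg hg' => decay g (deriv g)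
    (fun t ht => (hg t ht).continuousAt.continuousWithinAt)
    (fun t ht => (hg t ht.le).hasDerivAt.hasDerivWithinAt)
    (fun t ht _ => (hg' t ht).trans_eq (add_assoc _ _ _))⟩
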